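/- For |q| < 1, Euler's product E(q) = (q;q)_∞ satisfies the 5-dissection (q;q)_∞ = J_{25} ( J_{25,10}/J_{25,5} − q − q² J_{25,5}/J_{25,10} ), where the J-products are in the variable q. -/

import Mathlib

/-!
Euler's pentagonal number theorem writes `(q;q)_∞` as `∑ (-1)^n q^(n(3n+1)/2)` over the integers.
Splitting this series by the residue of `n` modulo `5` gives five bilateral series. The one with
`n ≡ 4` is `-q J_25`, again by the pentagonal number theorem (after `l ↦ -1 - l`). The residues `0`
and `3` together, and likewise `1` and `2` together, give the series of the quintuple product identity

  `∑ (-1)^l z^(3l) Q^(l(3l-1)/2) (1 + z Q^l) = J_1(Q) j(z²;Q) / j(z;Q)`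

in base `Q = q^25`, at `z = q^5` and, up to the factor `-q²`, at `z = q^10`. As
`j(q^20;q^25) = j(q^5;q^25)`, these are `J_25 J_{25,10} / J_{25,5}` and
`-q² J_25 J_{25,5} / J_{25,10}` (`pentagonal_dissection`, `quintuple`).

Everything rests on the Jacobi triple product identity (`jacobi_triple`), obtained from the
`q`-binomial theorem by dominated convergence. The pentagonal number theorem is a special case of it,
and the quintuple product identity follows by multiplying the triple products of `j(-z;q)` and
`j(qz²;q²)` and rearranging the absolutely convergent double series (`quintuple_aux`).

The exponents `n(n-1)/2` are avoided throughout by fixing a square root `p` of the base: a series in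
base `q = p²` is written with the integral exponents `n(n-1)` of `p`.
-/

/-- The q-Pochhammer symbol `(a;q)_∞ = ∏_{k≥0} (1 - a q^k)`. -/
noncomputable def qPochInf (a q : ℂ) : ℂ := ∏' k : ℕ, (1 - a * q ^ k)

/-- `Jba b a q` is `J_{b,a} = j(q^a;q^b) = (q^a;q^b)_∞ (q^{b-a};q^b)_∞ (q^b;q^b)_∞`. -/
noncomputable def Jba (b a : ℕ) (q : ℂ) : ℂ :=
  qPochInf (q ^ a) (q ^ b) * qPochInf (q ^ (b - a)) (q ^ b) * qPochInf (q ^ b) (q ^ b)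

/-- `Jb b q` is `J_b = (q^b;q^b)_∞`. -/
noncomputable def Jb (b : ℕ) (q : ℂ) : ℂ := qPochInf (q ^ b) (q ^ b)

open Filter Topology

/-! ### Infinite `q`-products -/

theorem summable_norm_mul_pow (a : ℂ) {q : ℂ} (hq : ‖q‖ < 1) :
    Summable fun k : ℕ => ‖-(a * q ^ k)‖ := by
  simp only [norm_neg, norm_mul, norm_pow]
  exact (summable_geometric_of_lt_one (norm_nonneg q) hq).mul_left _

theorem multipliable_qPoch (a : ℂ) {q : ℂ} (hq : ‖q‖ < 1) :
    Multipliable fun k : ℕ => 1 - a * q ^ k := by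
  simpa only [sub_eq_add_neg] using multipliable_one_add_of_summable (summable_norm_mul_pow a hq)

theorem tendsto_qPoch (a : ℂ) {q : ℂ} (hq : ‖q‖ < 1) :
    Tendsto (fun n => ∏ k ∈ Finset.range n, (1 - a * q ^ k)) atTop (𝓝 (qPochInf a q)) :=
  (multipliable_qPoch a hq).tendsto_prod_tprod_nat

theorem norm_pow_lt_one {q : ℂ} (hq : ‖q‖ < 1) {m : ℕ} (hm : m ≠ 0) : ‖q ^ m‖ < 1 := by
  rw [norm_pow]; exact pow_lt_one₀ (norm_nonneg q) hq hm

theorem one_sub_pow_ne_zero {q : ℂ} (hq : ‖q‖ < 1) {m : ℕ} (hm : m ≠ 0) : 1 - q ^ m ≠ 0 := by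
  intro h
  have h1 := norm_pow_lt_one hq hm
  rw [← sub_eq_zero.mp h, norm_one] at h1
  exact lt_irrefl _ h1

theorem qPochInf_ne_zero {q : ℂ} (hq : ‖q‖ < 1) {a b : ℕ} (ha : a ≠ 0) (hb : b ≠ 0) :
    qPochInf (q ^ a) (q ^ b) ≠ 0 := by
  have := tprod_one_add_ne_zero_of_summable (f := fun k : ℕ => -(q ^ a * (q ^ b) ^ k)) ?_
    (summable_norm_mul_pow _ (norm_pow_lt_one hq hb))
  · simpa only [qPochInf, ← sub_eq_add_neg] using this
  · intro k
    rw [← sub_eq_add_neg, ← pow_mul, ← pow_add]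
    exact one_sub_pow_ne_zero hq (by omega)

/-- Splitting the factors of `(a;q)_∞` by the residue of the index modulo `m`. -/
theorem qPochInf_dissect (a : ℂ) {q : ℂ} (hq : ‖q‖ < 1) {m : ℕ} (hm : m ≠ 0) :
    ∏ r ∈ Finset.range m, qPochInf (a * q ^ r) (q ^ m) = qPochInf a q := by
  refine tendsto_nhds_unique (tendsto_finsetProd (Finset.range m)
    fun r _ => tendsto_qPoch (a * q ^ r) (norm_pow_lt_one hq hm)) ?_
  have hmul : Tendsto (fun n : ℕ => m * n) atTop atTop :=
    tendsto_id.const_mul_atTop' (Nat.pos_of_ne_zero hm)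
  refine ((tendsto_qPoch a hq).comp hmul).congr fun n => ?_
  simp only [Function.comp]
  rw [Finset.prod_comm]
  induction n with
  | zero => simp
  | succ n ih =>
    rw [Nat.mul_succ, Finset.prod_range_add, ih, Finset.prod_range_succ]
    congr 1
    refine Finset.prod_congr rfl fun r _ => ?_
    rw [pow_add, pow_mul]; ring

theorem qPochInf_mul_neg (a : ℂ) {q : ℂ} (hq : ‖q‖ < 1) :
    qPochInf a q * qPochInf (-a) q = qPochInf (a ^ 2) (q ^ 2) := by
  refine tendsto_nhds_unique ((tendsto_qPoch a hq).mul (tendsto_qPoch (-a) hq)) ?_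
  refine (tendsto_qPoch (a ^ 2) (norm_pow_lt_one hq two_ne_zero)).congr fun n => ?_
  rw [← Finset.prod_mul_distrib]
  refine Finset.prod_congr rfl fun k _ => ?_
  ring

/-! ### Gaussian binomial coefficients -/

/-- The Gaussian binomial coefficient `[n, k]_q`, defined by the `q`-Pascal rule. -/
def gaussBinom (q : ℂ) : ℕ → ℕ → ℂ
  | _, 0 => 1
  | 0, _ + 1 => 0
  | n + 1, k + 1 => q ^ (k + 1) * gaussBinom q n (k + 1) + gaussBinom q n k

theorem gaussBinom_zero_right (q : ℂ) (n : ℕ) : gaussBinom q n 0 = 1 := by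
  cases n <;> rfl

theorem gaussBinom_succ_succ (q : ℂ) (n k : ℕ) : gaussBinom q (n + 1) (k + 1) =
    q ^ (k + 1) * gaussBinom q n (k + 1) + gaussBinom q n k := rfl

theorem gaussBinom_eq_zero (q : ℂ) : ∀ {n k : ℕ}, n < k → gaussBinom q n k = 0
  | 0, _ + 1, _ => rfl
  | n + 1, k + 1, h => by
    rw [gaussBinom_succ_succ, gaussBinom_eq_zero q (by omega : n < k + 1),
      gaussBinom_eq_zero q (by omega : n < k)]
    ring

/-- The `q`-binomial theorem. -/
theorem prod_one_add_mul_pow (q : ℂ) (n : ℕ) (x : ℂ) :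
    ∏ k ∈ Finset.range n, (1 + x * q ^ k) =
      ∑ k ∈ Finset.range (n + 1), gaussBinom q n k * q ^ (k.choose 2) * x ^ k := by
  induction n generalizing x with
  | zero => simp [gaussBinom_zero_right]
  | succ n ih =>
    rw [Finset.prod_range_succ', Finset.sum_range_succ']
    have h1 : ∏ k ∈ Finset.range n, (1 + x * q ^ (k + 1)) =
        ∏ k ∈ Finset.range n, (1 + (x * q) * q ^ k) :=
      Finset.prod_congr rfl fun k _ => by ring
    have h2 : ∑ k ∈ Finset.range (n + 1),
        gaussBinom q (n + 1) (k + 1) * q ^ ((k + 1).choose 2) * x ^ (k + 1) =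
        ∑ k ∈ Finset.range (n + 1),
          gaussBinom q n (k + 1) * q ^ ((k + 1).choose 2) * (x * q) ^ (k + 1) +
        x * ∑ k ∈ Finset.range (n + 1), gaussBinom q n k * q ^ (k.choose 2) * (x * q) ^ k := by
      rw [Finset.mul_sum, ← Finset.sum_add_distrib]
      refine Finset.sum_congr rfl fun k _ => ?_
      rw [gaussBinom_succ_succ, Nat.choose_succ_succ' k 1, Nat.choose_one_right]
      ring
    have h3 : ∑ k ∈ Finset.range (n + 1),
          gaussBinom q n (k + 1) * q ^ ((k + 1).choose 2) * (x * q) ^ (k + 1) + 1 =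
        ∑ k ∈ Finset.range (n + 1), gaussBinom q n k * q ^ (k.choose 2) * (x * q) ^ k := by
      rw [Finset.sum_range_succ, gaussBinom_eq_zero q (Nat.lt_succ_self n),
        Finset.sum_range_succ' _ n]
      simp [gaussBinom_zero_right]
    rw [h1, ih, h2, ← h3]
    simp only [gaussBinom_zero_right, pow_zero, Nat.choose_zero_succ]
    ring

/-- The finite product `(q;q)_n`. -/
noncomputable def qFact (q : ℂ) (n : ℕ) : ℂ := ∏ k ∈ Finset.range n, (1 - q * q ^ k)

theorem qFact_succ (q : ℂ) (n : ℕ) : qFact q (n + 1) = qFact q n * (1 - q ^ (n + 1)) := by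
  rw [qFact, qFact, Finset.prod_range_succ, pow_succ']

theorem qFact_ne_zero {q : ℂ} (hq : ‖q‖ < 1) (n : ℕ) : qFact q n ≠ 0 := by
  refine Finset.prod_ne_zero_iff.mpr fun k _ => ?_
  rw [← pow_succ']
  exact one_sub_pow_ne_zero hq (Nat.succ_ne_zero k)

/-- The quotient formula `[a + b, a]_q = (q;q)_(a+b) / ((q;q)_a (q;q)_b)`. -/
theorem gaussBinom_mul_qFact (q : ℂ) : ∀ a b : ℕ,
    gaussBinom q (a + b) a * (qFact q a * qFact q b) = qFact q (a + b)
  | 0, b => by simp [gaussBinom_zero_right, qFact]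
  | a + 1, 0 => by
    have h := gaussBinom_mul_qFact q a 0
    rw [add_zero] at h ⊢
    rw [gaussBinom_succ_succ, gaussBinom_eq_zero q (Nat.lt_succ_self a), qFact_succ]
    linear_combination (1 - q ^ (a + 1)) * h
  | a + 1, b + 1 => by
    have h1 := gaussBinom_mul_qFact q a (b + 1)
    have h2 := gaussBinom_mul_qFact q (a + 1) b
    rw [show a + 1 + (b + 1) = (a + b + 1) + 1 by ring, gaussBinom_succ_succ, qFact_succ q (a + b + 1),
      qFact_succ q a, qFact_succ q b]
    rw [show a + (b + 1) = a + b + 1 by ring, qFact_succ q b] at h1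
    rw [show a + 1 + b = a + b + 1 by ring, qFact_succ q a] at h2
    linear_combination (1 - q ^ (a + 1)) * h1 + q ^ (a + 1) * (1 - q ^ (b + 1)) * h2

theorem tendsto_qFact {q : ℂ} (hq : ‖q‖ < 1) : Tendsto (qFact q) atTop (𝓝 (qPochInf q q)) :=
  tendsto_qPoch q hq

theorem qPochInf_self_ne_zero {q : ℂ} (hq : ‖q‖ < 1) : qPochInf q q ≠ 0 := by
  simpa using qPochInf_ne_zero hq one_ne_zero one_ne_zero

/-- The bound is uniform since `(q;q)_n` converges to a nonzero limit. -/
theorem gaussBinom_bounded {q : ℂ} (hq : ‖q‖ < 1) : ∃ B : ℝ, ∀ n k, ‖gaussBinom q n k‖ ≤ B := by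
  obtain ⟨B₁, hB₁⟩ := (Metric.isBounded_range_of_tendsto _ (tendsto_qFact hq)).exists_norm_le
  obtain ⟨B₂, hB₂⟩ := (Metric.isBounded_range_of_tendsto _
    ((tendsto_qFact hq).inv₀ (qPochInf_self_ne_zero hq))).exists_norm_le
  replace hB₁ : ∀ n, ‖qFact q n‖ ≤ B₁ := fun n => hB₁ _ ⟨n, rfl⟩
  replace hB₂ : ∀ n, ‖(qFact q n)⁻¹‖ ≤ B₂ := fun n => hB₂ _ ⟨n, rfl⟩
  have h1 : 0 ≤ B₁ := (norm_nonneg _).trans (hB₁ 0)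
  have h2 : 0 ≤ B₂ := (norm_nonneg _).trans (hB₂ 0)
  refine ⟨B₁ * (B₂ * B₂), fun n k => ?_⟩
  rcases lt_or_ge n k with h | h
  · rw [gaussBinom_eq_zero q h, norm_zero]; positivity
  · obtain ⟨b, rfl⟩ := Nat.exists_eq_add_of_le h
    have : gaussBinom q (k + b) k = qFact q (k + b) * ((qFact q k)⁻¹ * (qFact q b)⁻¹) := by
      rw [← gaussBinom_mul_qFact q k b]
      have := qFact_ne_zero hq k
      have := qFact_ne_zero hq b
      field_simp
    rw [this, norm_mul, norm_mul]
    gcongr <;> apply_assumption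

/-! ### The Jacobi triple product identity -/

/-- The term `(-1)^n z^n q^(n(n-1)/2)` of the bilateral theta series in base `q`, expressed through
a square root `p` of `q` so that the exponent `n(n-1)` is an integer. -/
noncomputable def thetaTerm (p z : ℂ) (n : ℤ) : ℂ := (-1) ^ n * z ^ n * p ^ (n * (n - 1))

/-- For `w = -z/p`, the terms are `w^n p^(n²)`, those of the two-variable Jacobi theta function at
`log w / (2πi)` and `τ = log p / (πi)`; here `‖p‖ < 1` says that `τ` lies in the upper half-plane. -/
theorem summable_thetaTerm {p z : ℂ} (hp0 : p ≠ 0) (hp : ‖p‖ < 1) (hz : z ≠ 0) :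
    Summable (thetaTerm p z) := by
  set w : ℂ := -z / p with hw
  have hw0 : w ≠ 0 := div_ne_zero (neg_ne_zero.mpr hz) hp0
  have hpi : (Real.pi : ℂ) ≠ 0 := by exact_mod_cast Real.pi_ne_zero
  have hs := (summable_jacobiTheta₂_term_iff (Complex.log w / (2 * Real.pi * Complex.I))
    (Complex.log p / (Real.pi * Complex.I))).mpr ?_
  · refine hs.congr fun n => ?_
    have e : 2 * (Real.pi : ℂ) * Complex.I * n * (Complex.log w / (2 * Real.pi * Complex.I)) +
        Real.pi * Complex.I * (n : ℂ) ^ 2 * (Complex.log p / (Real.pi * Complex.I)) =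
        (n : ℂ) * Complex.log w + ((n ^ 2 : ℤ) : ℂ) * Complex.log p := by
      have := Complex.I_ne_zero
      push_cast
      field_simp
    rw [jacobiTheta₂_term, e, Complex.exp_add, Complex.exp_int_mul, Complex.exp_int_mul,
      Complex.exp_log hw0, Complex.exp_log hp0, thetaTerm, hw, div_zpow, ← mul_zpow,
      show n * (n - 1) = n ^ 2 - n by ring, zpow_sub₀ hp0, neg_one_mul]
    ring
  · have : Complex.log p / (Real.pi * Complex.I) = (-(Complex.log p / Real.pi)) * Complex.I := by
      have := Complex.I_ne_zero
      field_simp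
      rw [Complex.I_sq]; ring
    rw [this, Complex.mul_I_im, Complex.neg_re, Complex.div_ofReal_re, Complex.log_re]
    have := Real.log_neg (norm_pos_iff.mpr hp0) hp
    have := div_neg_of_neg_of_pos this Real.pi_pos
    linarith

theorem pow_choose_two (p : ℂ) (j : ℕ) :
    (p ^ 2) ^ (j.choose 2) = p ^ ((j : ℤ) * ((j : ℤ) - 1)) := by
  rw [← pow_mul, ← zpow_natCast]
  congr 1
  induction j with
  | zero => simp
  | succ j ih =>
    rw [Nat.choose_succ_succ' j 1, Nat.choose_one_right]
    push_cast at ih ⊢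
    linear_combination ih

/-- The finite form of the Jacobi triple product identity: the `q`-binomial theorem at
`x = -z q^(-n)` with `2n` factors, after dividing by the product of the leading terms of the
factors with negative powers of `q`. -/
theorem finite_jacobi_triple {p z : ℂ} (hp0 : p ≠ 0) (hz : z ≠ 0) (n : ℕ) :
    (∏ k ∈ Finset.range n, (1 - z * (p ^ 2) ^ k)) *
        ∏ k ∈ Finset.range n, (1 - p ^ 2 / z * (p ^ 2) ^ k) =
      ∑ j ∈ Finset.range (n + n + 1),
        gaussBinom (p ^ 2) (n + n) j * thetaTerm p z ((j : ℤ) - n) := by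
  -- The factors `1 - z q^(-k-1)` are rewritten as `(-z q^(-k-1)) (1 - q^(k+1)/z)`.
  have hC : ∏ k ∈ Finset.range n, (-z / (p ^ 2) ^ (k + 1)) =
      (-1) ^ (n : ℤ) * z ^ (n : ℤ) * p ^ (-((n : ℤ) * (n + 1))) := by
    induction n with
    | zero => simp
    | succ n ih =>
      have e : -(((n + 1 : ℕ) : ℤ) * ((n + 1 : ℕ) + 1)) = -((n : ℤ) * (n + 1)) - (2 * (n + 1) : ℕ) := by
        push_cast; ring
      rw [Finset.prod_range_succ, ih, e, zpow_sub₀ hp0, zpow_natCast p, pow_mul]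
      simp only [zpow_natCast]
      field_simp
      ring
  have hC0 : ∏ k ∈ Finset.range n, (-z / (p ^ 2) ^ (k + 1)) ≠ 0 :=
    Finset.prod_ne_zero_iff.mpr fun k _ => div_ne_zero (neg_ne_zero.mpr hz) (by positivity)
  have h := prod_one_add_mul_pow (p ^ 2) (n + n) (-z / (p ^ 2) ^ n)
  have h1 : ∏ k ∈ Finset.range n, (1 + -z / (p ^ 2) ^ n * (p ^ 2) ^ k) =
      (∏ k ∈ Finset.range n, (-z / (p ^ 2) ^ (k + 1))) *
        ∏ k ∈ Finset.range n, (1 - p ^ 2 / z * (p ^ 2) ^ k) := by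
    rw [← Finset.prod_mul_distrib, ← Finset.prod_range_reflect]
    refine Finset.prod_congr rfl fun k hk => ?_
    have hk := Finset.mem_range.mp hk
    obtain ⟨m, rfl⟩ : ∃ m, n = m + (k + 1) := ⟨n - (k + 1), by omega⟩
    rw [show m + (k + 1) - 1 - k = m by omega]
    field_simp
    ring
  have h2 : ∏ k ∈ Finset.range n, (1 + -z / (p ^ 2) ^ n * (p ^ 2) ^ (n + k)) =
      ∏ k ∈ Finset.range n, (1 - z * (p ^ 2) ^ k) := by
    refine Finset.prod_congr rfl fun k _ => ?_
    field_simp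
    ring
  rw [Finset.prod_range_add, h1, h2] at h
  refine mul_left_cancel₀ hC0 ?_
  rw [Finset.mul_sum]
  calc _ = _ := by ring
    _ = _ := h
    _ = _ := by
      refine Finset.sum_congr rfl fun j _ => ?_
      have hx : (-z / (p ^ 2) ^ n) ^ j =
          (-1) ^ (j : ℤ) * z ^ (j : ℤ) * p ^ (-(2 * n * j : ℤ)) := by
        rw [div_pow, ← pow_mul, ← pow_mul, zpow_neg, zpow_natCast, zpow_natCast,
          show (2 * n * j : ℤ) = ((2 * (n * j) : ℕ) : ℤ) by push_cast; ring, zpow_natCast,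
          ← mul_pow, neg_one_mul, div_eq_mul_inv]
      have e1 : (-1 : ℂ) ^ (j : ℤ) = (-1) ^ (n : ℤ) * (-1) ^ ((j : ℤ) - n) := by
        rw [← zpow_add₀ (by norm_num)]; congr 1; ring
      have e2 : z ^ (j : ℤ) = z ^ (n : ℤ) * z ^ ((j : ℤ) - n) := by
        rw [← zpow_add₀ hz]; congr 1; ring
      have e3 : p ^ ((j : ℤ) * ((j : ℤ) - 1)) * p ^ (-(2 * n * j : ℤ)) =
          p ^ (-((n : ℤ) * (n + 1))) * p ^ (((j : ℤ) - n) * ((j : ℤ) - n - 1)) := by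
        rw [← zpow_add₀ hp0, ← zpow_add₀ hp0]; congr 1; ring
      rw [hC, pow_choose_two, hx, thetaTerm, e1, e2]
      linear_combination gaussBinom (p ^ 2) (n + n) j * ((-1) ^ (n : ℤ) * (-1) ^ ((j : ℤ) - n)) *
        (z ^ (n : ℤ) * z ^ ((j : ℤ) - n)) * e3

theorem tendsto_gaussBinom_central {q : ℂ} (hq : ‖q‖ < 1) (i : ℤ) :
    Tendsto (fun n : ℕ => gaussBinom q (n + n) ((i + n).toNat)) atTop (𝓝 (qPochInf q q)⁻¹) := by
  have hE := qPochInf_self_ne_zero hq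
  have t1 : Tendsto (fun n : ℕ => (i + n).toNat) atTop atTop :=
    tendsto_atTop.mpr fun b => (eventually_ge_atTop (b + i.natAbs)).mono fun n hn => by omega
  have t2 : Tendsto (fun n : ℕ => ((n : ℤ) - i).toNat) atTop atTop :=
    tendsto_atTop.mpr fun b => (eventually_ge_atTop (b + i.natAbs)).mono fun n hn => by omega
  have t3 : Tendsto (fun n : ℕ => n + n) atTop atTop :=
    tendsto_atTop.mpr fun b => (eventually_ge_atTop b).mono fun n hn => by omega
  have h := (tendsto_qFact hq).comp t3 |>.div
    (((tendsto_qFact hq).comp t1).mul ((tendsto_qFact hq).comp t2)) (mul_ne_zero hE hE)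
  rw [show qPochInf q q / (qPochInf q q * qPochInf q q) = (qPochInf q q)⁻¹ by field_simp] at h
  refine h.congr' ((eventually_ge_atTop i.natAbs).mono fun n hn => ?_)
  have := gaussBinom_mul_qFact q (i + n).toNat ((n : ℤ) - i).toNat
  rw [show (i + n).toNat + ((n : ℤ) - i).toNat = n + n by omega] at this
  simp only [Function.comp, Pi.div_apply]
  rw [div_eq_iff (mul_ne_zero (qFact_ne_zero hq _) (qFact_ne_zero hq _)), this]

/-- **Jacobi triple product identity** in base `p²`. It is the limit of the finite form, by
dominated convergence: Gaussian binomials are bounded and the central ones tend to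
`1 / (p²;p²)_∞`. -/
theorem jacobi_triple {p z : ℂ} (hp0 : p ≠ 0) (hp : ‖p‖ < 1) (hz : z ≠ 0) :
    ∑' n, thetaTerm p z n =
      qPochInf z (p ^ 2) * qPochInf (p ^ 2 / z) (p ^ 2) * qPochInf (p ^ 2) (p ^ 2) := by
  have hq : ‖p ^ 2‖ < 1 := norm_pow_lt_one hp two_ne_zero
  obtain ⟨B, hB⟩ := gaussBinom_bounded hq
  have hB0 : 0 ≤ B := (norm_nonneg _).trans (hB 0 0)
  -- The guard stops `toNat` from giving spurious terms at `i < -n`; for `i > n` the Gaussian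
  -- binomial vanishes.
  set f : ℕ → ℤ → ℂ := fun n i =>
    if -(n : ℤ) ≤ i then gaussBinom (p ^ 2) (n + n) ((i + n).toNat) * thetaTerm p z i else 0 with hf
  have hlim : Tendsto (fun n => ∑' i, f n i) atTop
      (𝓝 (∑' i, (qPochInf (p ^ 2) (p ^ 2))⁻¹ * thetaTerm p z i)) := by
    refine tendsto_tsum_of_dominated_convergence
      (bound := fun i => B * ‖thetaTerm p z i‖)
      ((summable_thetaTerm hp0 hp hz).norm.mul_left B) (fun i => ?_)
      (Eventually.of_forall fun n i => ?_)
    · refine ((tendsto_gaussBinom_central hq i).mul_const _).congr'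
        ((eventually_ge_atTop i.natAbs).mono fun n hn => ?_)
      simp only [hf]
      rw [if_pos (by omega)]
    · simp only [hf]
      split_ifs
      · rw [norm_mul]
        exact mul_le_mul_of_nonneg_right (hB _ _) (norm_nonneg _)
      · rw [norm_zero]; positivity
  have hfin : ∀ n, ∑' i, f n i = (∏ k ∈ Finset.range n, (1 - z * (p ^ 2) ^ k)) *
        ∏ k ∈ Finset.range n, (1 - p ^ 2 / z * (p ^ 2) ^ k) := by
    intro n
    rw [finite_jacobi_triple hp0 hz n]
    have hinj : Function.Injective fun j : ℕ => (j : ℤ) - n := fun a b h => by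
      simpa using h
    refine HasSum.tsum_eq ((hinj.hasSum_iff fun i hi => ?_).mp ?_)
    · simp only [hf]
      refine if_neg fun h => hi ⟨(i + n).toNat, ?_⟩
      show (((i + n).toNat : ℕ) : ℤ) - n = i
      omega
    · have : (f n ∘ fun j : ℕ => (j : ℤ) - n) =
          fun j : ℕ => gaussBinom (p ^ 2) (n + n) j * thetaTerm p z ((j : ℤ) - n) := by
        funext j
        simp only [hf, Function.comp]
        rw [if_pos (by omega)]
        simp
      rw [this]
      refine hasSum_sum_of_ne_finset_zero fun j hj => ?_
      rw [gaussBinom_eq_zero _ (by simpa [Nat.lt_succ_iff] using hj), zero_mul]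
  have key := tendsto_nhds_unique hlim
    ((((tendsto_qPoch z hq).mul (tendsto_qPoch (p ^ 2 / z) hq))).congr fun n => (hfin n).symm)
  rw [tsum_mul_left] at key
  rw [← key]
  have := qPochInf_self_ne_zero hq
  field_simp

theorem neg_one_zpow_congr {m n : ℤ} (h : (m - n) % 2 = 0) : (-1 : ℂ) ^ m = (-1) ^ n := by
  rw [show m = n + (m - n) by ring, zpow_add₀ (by norm_num), (Int.even_iff.mpr h).neg_one_zpow,
    mul_one]

theorem neg_one_zpow_congr_neg {m n : ℤ} (h : (m - n) % 2 = 1) : (-1 : ℂ) ^ m = -(-1) ^ n := by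
  rw [show m = n + (m - n) by ring, zpow_add₀ (by norm_num), (Int.odd_iff.mpr h).neg_one_zpow]
  ring

theorem thetaTerm_pow {p : ℂ} (hp0 : p ≠ 0) (a b : ℕ) (n : ℤ) :
    thetaTerm (p ^ a) (p ^ b) n = (-1) ^ n * p ^ (b * n + a * (n * (n - 1))) := by
  rw [thetaTerm, ← zpow_natCast, ← zpow_natCast, ← zpow_mul, ← zpow_mul, zpow_add₀ hp0, mul_assoc]

theorem tsum_int_mod (m : ℕ) [NeZero m] {f : ℤ → ℂ} (hf : Summable f) :
    ∑' n, f n = ∑ r : Fin m, ∑' l : ℤ, f (l * m + (r : ℕ)) := by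
  have hs : Summable fun x : ℤ × Fin m => f ((Int.divModEquiv m).symm x) :=
    (Int.divModEquiv m).symm.summable_iff.mpr hf
  rw [← (Int.divModEquiv m).symm.tsum_eq f, hs.tsum_prod]
  simp only [tsum_fintype]
  refine Summable.tsum_finsetSum fun r _ => ?_
  exact hs.comp_injective (i := fun l : ℤ => (l, r)) fun a b h => by simpa using h

/-! ### The pentagonal number theorem -/

/-- The term `(-1)^n q^(n(3n+1)/2)` of the pentagonal number series, with `q = p²`. -/
noncomputable def penTerm (p : ℂ) (n : ℤ) : ℂ := (-1) ^ n * p ^ (n * (3 * n + 1))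

theorem penTerm_eq {p : ℂ} (hp0 : p ≠ 0) : penTerm p = thetaTerm (p ^ 3) (p ^ 4) := by
  funext n
  rw [thetaTerm_pow hp0, penTerm]
  congr 2
  push_cast; ring

theorem summable_penTerm {p : ℂ} (hp0 : p ≠ 0) (hp : ‖p‖ < 1) : Summable (penTerm p) := by
  rw [penTerm_eq hp0]
  exact summable_thetaTerm (pow_ne_zero _ hp0) (norm_pow_lt_one hp three_ne_zero)
    (pow_ne_zero _ hp0)

/-- **Euler's pentagonal number theorem**: the triple product in base `q³` at `z = q²`. -/
theorem pentagonal_number {p : ℂ} (hp0 : p ≠ 0) (hp : ‖p‖ < 1) :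
    ∑' n, penTerm p n = qPochInf (p ^ 2) (p ^ 2) := by
  rw [penTerm_eq hp0, jacobi_triple (pow_ne_zero _ hp0) (norm_pow_lt_one hp three_ne_zero)
    (pow_ne_zero _ hp0), ← qPochInf_dissect (p ^ 2) (norm_pow_lt_one hp two_ne_zero) three_ne_zero]
  have e : (p ^ 3) ^ 2 / p ^ 4 = p ^ 2 := by field_simp
  rw [e]
  simp only [Finset.prod_range_succ, Finset.prod_range_zero, one_mul, mul_one, ← pow_mul,
    ← pow_add]
  ring_nf

/-! ### The quintuple product identity -/

/-- The **quintuple product identity**, before cancelling. Multiply the triple products for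
`j(-z;q)` and `j(qz²;q²)` and collect the powers `z^k`. The coefficient of `z^k` is a monomial times
`(q²;q²)_∞` if `k` is `0` or `1` modulo `3`, and vanishes if `k` is `2` modulo `3`. -/
theorem quintuple_aux {p z : ℂ} (hp0 : p ≠ 0) (hp : ‖p‖ < 1) (hz : z ≠ 0) :
    (∑' l, thetaTerm (p ^ 3) (z ^ 3 * p ^ 2) l + z * ∑' l, thetaTerm (p ^ 3) (z ^ 3 * p ^ 4) l) *
        ∑' n, penTerm (p ^ 2) n =
      (∑' n, thetaTerm p (-z) n) * ∑' n, thetaTerm (p ^ 2) (p ^ 2 * z ^ 2) n := by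
  have hp2 : ‖p ^ 2‖ < 1 := norm_pow_lt_one hp two_ne_zero
  have hp20 : p ^ 2 ≠ 0 := pow_ne_zero _ hp0
  have hA := (summable_thetaTerm hp0 hp (neg_ne_zero.mpr hz)).norm
  have hB := (summable_thetaTerm hp20 hp2 (mul_ne_zero hp20 (pow_ne_zero 2 hz))).norm
  set t : ℤ → ℤ → ℂ := fun m n => thetaTerm p (-z) m * thetaTerm (p ^ 2) (p ^ 2 * z ^ 2) n with ht
  have ht' : ∀ m n, t m n = (-1) ^ n * (z ^ (m + 2 * n) * p ^ (m * (m - 1) + 2 * n ^ 2)) := by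
    intro m n
    have e1 : (-1 : ℂ) ^ m * (-z) ^ m = z ^ m := by rw [← mul_zpow]; simp
    have e2 : (p ^ 2 * z ^ 2) ^ n = p ^ (2 * n) * z ^ (2 * n) := by
      rw [mul_zpow, zpow_mul, zpow_mul]; rfl
    have e3 : (p ^ 2) ^ (n * (n - 1)) = p ^ (2 * (n * (n - 1))) := by
      rw [zpow_mul p 2]; rfl
    have e4 : p ^ (2 * n) * p ^ (2 * (n * (n - 1))) = p ^ (2 * n ^ 2) := by
      rw [← zpow_add₀ hp0]; congr 1; ring
    simp only [ht, thetaTerm]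
    rw [e1, e2, e3, zpow_add₀ hz, zpow_add₀ hp0, ← e4]
    ring
  let e : ℤ × ℤ ≃ ℤ × ℤ :=
    { toFun := fun x => (x.1 - 2 * x.2, x.2)
      invFun := fun x => (x.1 + 2 * x.2, x.2)
      left_inv := fun x => by ext <;> simp
      right_inv := fun x => by ext <;> simp }
  have hs : Summable fun x : ℤ × ℤ => t (x.1 - 2 * x.2) x.2 :=
    e.summable_iff.mpr (summable_mul_of_summable_norm hA hB)
  have hprod : (∑' n, thetaTerm p (-z) n) * ∑' n, thetaTerm (p ^ 2) (p ^ 2 * z ^ 2) n =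
      ∑' k, ∑' n, t (k - 2 * n) n := by
    rw [tsum_mul_tsum_of_summable_norm hA hB, ← hs.tsum_prod,
      ← e.tsum_eq fun x : ℤ × ℤ => thetaTerm p (-z) x.1 * thetaTerm (p ^ 2) (p ^ 2 * z ^ 2) x.2]
    rfl
  -- Shifting the inner index by `l` separates the variables `l` and `n`.
  have hshift : ∀ k l : ℤ, ∑' n, t (k - 2 * n) n = ∑' n, t (k - 2 * (n + l)) (n + l) := fun k l =>
    ((Equiv.addRight l).tsum_eq fun n => t (k - 2 * n) n).symm
  have h0 : ∀ l : ℤ, ∑' n, t (l * (3 : ℕ) + ((0 : Fin 3) : ℕ) - 2 * n) n =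
      thetaTerm (p ^ 3) (z ^ 3 * p ^ 2) l * ∑' n, penTerm (p ^ 2) n := by
    intro l
    rw [hshift _ l, ← tsum_mul_left]
    refine tsum_congr fun n => ?_
    rw [ht', thetaTerm, penTerm, mul_zpow, neg_one_zpow_congr (show (n + l - (l + n)) % 2 = 0 by omega),
      zpow_add₀ (by norm_num)]
    simp only [← zpow_natCast, ← zpow_mul]
    rw [show l * ((3 : ℕ) : ℤ) + (((0 : Fin 3) : ℕ) : ℤ) - 2 * (n + l) + 2 * (n + l) =
      ((3 : ℕ) : ℤ) * l by simp; ring]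
    rw [show (l * ((3 : ℕ) : ℤ) + (((0 : Fin 3) : ℕ) : ℤ) - 2 * (n + l)) *
        (l * ((3 : ℕ) : ℤ) + (((0 : Fin 3) : ℕ) : ℤ) - 2 * (n + l) - 1) + 2 * (n + l) ^ 2 =
      ((2 : ℕ) : ℤ) * l + ((3 : ℕ) : ℤ) * (l * (l - 1)) + ((2 : ℕ) : ℤ) * (n * (3 * n + 1)) by
        simp; ring, zpow_add₀ hp0, zpow_add₀ hp0]
    ring
  have h1 : ∀ l : ℤ, ∑' n, t (l * (3 : ℕ) + ((1 : Fin 3) : ℕ) - 2 * n) n =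
      z * thetaTerm (p ^ 3) (z ^ 3 * p ^ 4) l * ∑' n, penTerm (p ^ 2) n := by
    intro l
    rw [hshift _ l, ← tsum_mul_left, ← (Equiv.neg ℤ).tsum_eq]
    refine tsum_congr fun n => ?_
    rw [ht', thetaTerm, penTerm, mul_zpow, Equiv.neg_apply,
      neg_one_zpow_congr (show (-n + l - (l + n)) % 2 = 0 by omega), zpow_add₀ (by norm_num)]
    simp only [← zpow_natCast, ← zpow_mul]
    rw [show l * ((3 : ℕ) : ℤ) + (((1 : Fin 3) : ℕ) : ℤ) - 2 * (-n + l) + 2 * (-n + l) =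
      ((3 : ℕ) : ℤ) * l + 1 by simp; ring, zpow_add_one₀ hz]
    rw [show (l * ((3 : ℕ) : ℤ) + (((1 : Fin 3) : ℕ) : ℤ) - 2 * (-n + l)) *
        (l * ((3 : ℕ) : ℤ) + (((1 : Fin 3) : ℕ) : ℤ) - 2 * (-n + l) - 1) + 2 * (-n + l) ^ 2 =
      ((4 : ℕ) : ℤ) * l + ((3 : ℕ) : ℤ) * (l * (l - 1)) + ((2 : ℕ) : ℤ) * (n * (3 * n + 1)) by
        simp; ring, zpow_add₀ hp0, zpow_add₀ hp0]
    ring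
  have h2 : ∀ l : ℤ, ∑' n, t (l * (3 : ℕ) + ((2 : Fin 3) : ℕ) - 2 * n) n = 0 := by
    intro l
    rw [hshift _ l]
    -- The involution `n ↦ 1 - n` changes the sign of every term.
    have h : ∑' n, t (l * (3 : ℕ) + ((2 : Fin 3) : ℕ) - 2 * (n + l)) (n + l) =
        -∑' n, t (l * (3 : ℕ) + ((2 : Fin 3) : ℕ) - 2 * (n + l)) (n + l) := by
      conv_lhs => rw [← (Equiv.subLeft (1 : ℤ)).tsum_eq]
      rw [← tsum_neg]
      refine tsum_congr fun n => ?_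
      rw [ht', ht', Equiv.subLeft_apply,
        neg_one_zpow_congr_neg (show (1 - n + l - (n + l)) % 2 = 1 by omega), neg_mul]
      congr 3
      · congr 1; ring
      · congr 1; simp; ring
    linear_combination h / 2
  have hU : Summable (thetaTerm (p ^ 3) (z ^ 3 * p ^ 2)) :=
    summable_thetaTerm (pow_ne_zero _ hp0) (norm_pow_lt_one hp three_ne_zero)
      (mul_ne_zero (pow_ne_zero _ hz) (pow_ne_zero _ hp0))
  rw [hprod, tsum_int_mod 3 hs.prod, Fin.sum_univ_three]
  simp only [h0, h1, h2, tsum_zero, tsum_mul_right, tsum_mul_left]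
  ring

/-- The **quintuple product identity** in the form `S(z) j(z;q) = J_1 j(z²;q)`, where `S` is the
bilateral series, `q = p²`, and a common factor `J_1` has been cancelled. -/
theorem quintuple {p z : ℂ} (hp0 : p ≠ 0) (hp : ‖p‖ < 1) (hz : z ≠ 0) :
    (∑' l, thetaTerm (p ^ 3) (z ^ 3 * p ^ 2) l + z * ∑' l, thetaTerm (p ^ 3) (z ^ 3 * p ^ 4) l) *
        (qPochInf z (p ^ 2) * qPochInf (p ^ 2 / z) (p ^ 2)) =
      qPochInf (z ^ 2) (p ^ 2) * qPochInf (p ^ 2 / z ^ 2) (p ^ 2) * qPochInf (p ^ 2) (p ^ 2) := by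
  have hp2 : ‖p ^ 2‖ < 1 := norm_pow_lt_one hp two_ne_zero
  have hp20 : p ^ 2 ≠ 0 := pow_ne_zero _ hp0
  have h := quintuple_aux hp0 hp hz
  rw [jacobi_triple hp0 hp (neg_ne_zero.mpr hz), pentagonal_number hp20 hp2,
    jacobi_triple hp20 hp2 (mul_ne_zero hp20 (pow_ne_zero 2 hz))] at h
  have hE : qPochInf ((p ^ 2) ^ 2) ((p ^ 2) ^ 2) ≠ 0 :=
    qPochInf_self_ne_zero (norm_pow_lt_one hp2 two_ne_zero)
  have a1 := qPochInf_mul_neg z hp2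
  have a2 := qPochInf_mul_neg (p ^ 2 / z) hp2
  have b1 := qPochInf_dissect (z ^ 2) hp2 two_ne_zero
  have b2 := qPochInf_dissect (p ^ 2 / z ^ 2) hp2 two_ne_zero
  simp only [Finset.prod_range_succ, Finset.prod_range_zero, one_mul, pow_zero, mul_one,
    pow_one] at b1 b2
  rw [show (p ^ 2) ^ 2 / (p ^ 2 * z ^ 2) = p ^ 2 / z ^ 2 by field_simp,
    show p ^ 2 / -z = -(p ^ 2 / z) by rw [div_neg], mul_comm (p ^ 2) (z ^ 2)] at h
  rw [show p ^ 2 / z ^ 2 * p ^ 2 = (p ^ 2 / z) ^ 2 by field_simp] at b2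
  refine mul_right_cancel₀ hE ?_
  rw [← b1, ← b2, ← a1, ← a2]
  linear_combination (qPochInf z (p ^ 2) * qPochInf (p ^ 2 / z) (p ^ 2)) * h

/-! ### The 5-dissection -/

/-- The `5`-dissection of the pentagonal number series by the residue of the index modulo `5`. The
residues `0, 3` and `1, 2` give the series in the quintuple product identity in base `q^25` at
`z = q^5` and `z = q^10`, and the residue `4` gives the pentagonal number series in `q^25`. -/
theorem pentagonal_dissection {p : ℂ} (hp0 : p ≠ 0) (hp : ‖p‖ < 1) :
    ∑' n, penTerm p n =
      (∑' l, thetaTerm ((p ^ 25) ^ 3) ((p ^ 10) ^ 3 * (p ^ 25) ^ 2) l +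
        p ^ 10 * ∑' l, thetaTerm ((p ^ 25) ^ 3) ((p ^ 10) ^ 3 * (p ^ 25) ^ 4) l) -
      p ^ 2 * ∑' l, penTerm (p ^ 25) l -
      p ^ 4 * (∑' l, thetaTerm ((p ^ 25) ^ 3) ((p ^ 20) ^ 3 * (p ^ 25) ^ 2) l +
        p ^ 20 * ∑' l, thetaTerm ((p ^ 25) ^ 3) ((p ^ 20) ^ 3 * (p ^ 25) ^ 4) l) := by
  rw [tsum_int_mod 5 (summable_penTerm hp0 hp), Fin.sum_univ_five, penTerm_eq (pow_ne_zero _ hp0)]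
  simp only [← pow_mul, ← pow_add]
  have r0 : ∀ l : ℤ, penTerm p (l * (5 : ℕ) + ((0 : Fin 5) : ℕ)) =
      thetaTerm (p ^ (25 * 3)) (p ^ (10 * 3 + 25 * 2)) l := by
    intro l
    rw [thetaTerm_pow hp0, penTerm, neg_one_zpow_congr (n := l) (by simp; omega)]
    congr 2; simp; ring
  have r1 : ∀ l : ℤ, penTerm p (l * (5 : ℕ) + ((1 : Fin 5) : ℕ)) =
      -p ^ 4 * thetaTerm (p ^ (25 * 3)) (p ^ (20 * 3 + 25 * 2)) l := by
    intro l
    rw [thetaTerm_pow hp0, penTerm, neg_one_zpow_congr_neg (n := l) (by simp; omega), neg_mul,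
      neg_mul, mul_left_comm, ← zpow_natCast p 4, ← zpow_add₀ hp0]
    congr 3; simp; ring
  -- For the residues `2`, `3`, `4` the index is reversed by `l ↦ -1 - l`.
  have r2 : ∀ l : ℤ, penTerm p ((-1 - l) * (5 : ℕ) + ((2 : Fin 5) : ℕ)) =
      -p ^ 24 * thetaTerm (p ^ (25 * 3)) (p ^ (20 * 3 + 25 * 4)) l := by
    intro l
    rw [thetaTerm_pow hp0, penTerm, neg_one_zpow_congr_neg (n := l) (by simp; omega), neg_mul,
      neg_mul, mul_left_comm, ← zpow_natCast p 24, ← zpow_add₀ hp0]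
    congr 3; simp; ring
  have r3 : ∀ l : ℤ, penTerm p ((-1 - l) * (5 : ℕ) + ((3 : Fin 5) : ℕ)) =
      p ^ 10 * thetaTerm (p ^ (25 * 3)) (p ^ (10 * 3 + 25 * 4)) l := by
    intro l
    rw [thetaTerm_pow hp0, penTerm, neg_one_zpow_congr (n := l) (by simp; omega),
      mul_left_comm, ← zpow_natCast p 10, ← zpow_add₀ hp0]
    congr 2; simp; ring
  have r4 : ∀ l : ℤ, penTerm p ((-1 - l) * (5 : ℕ) + ((4 : Fin 5) : ℕ)) =
      -p ^ 2 * thetaTerm (p ^ (25 * 3)) (p ^ (25 * 4)) l := by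
    intro l
    rw [thetaTerm_pow hp0, penTerm, neg_one_zpow_congr_neg (n := l) (by simp; omega), neg_mul,
      neg_mul, mul_left_comm, ← zpow_natCast p 2, ← zpow_add₀ hp0]
    congr 3; simp; ring
  have hrefl : ∀ f : ℤ → ℂ, ∑' l, f l = ∑' l, f (-1 - l) := fun f =>
    ((Equiv.subLeft (-1 : ℤ)).tsum_eq f).symm
  rw [hrefl fun l => penTerm p (l * (5 : ℕ) + ((2 : Fin 5) : ℕ)),
    hrefl fun l => penTerm p (l * (5 : ℕ) + ((3 : Fin 5) : ℕ)),
    hrefl fun l => penTerm p (l * (5 : ℕ) + ((4 : Fin 5) : ℕ))]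
  simp only [r0, r1, r2, r3, r4, tsum_mul_left]
  ring

theorem five_dissection_euler_product (q : ℂ) (hq : ‖q‖ < 1) :
    qPochInf q q =
      Jb 25 q * (Jba 25 10 q / Jba 25 5 q - q - q ^ 2 * (Jba 25 5 q / Jba 25 10 q)) := by
  rcases eq_or_ne q 0 with rfl | hq0
  · simp [Jba, Jb, qPochInf]
  obtain ⟨p, rfl⟩ := IsAlgClosed.exists_pow_nat_eq q two_pos
  have hp0 : p ≠ 0 := fun h => hq0 (by simp [h])
  have hp : ‖p‖ < 1 := by
    rw [norm_pow] at hq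
    exact (pow_lt_one_iff_of_nonneg (norm_nonneg p) two_ne_zero).mp hq
  have hP : ‖p ^ 25‖ < 1 := norm_pow_lt_one hp (by norm_num)
  have hP0 : p ^ 25 ≠ 0 := pow_ne_zero _ hp0
  have h1 := quintuple hP0 hP (pow_ne_zero 10 hp0)
  have h2 := quintuple hP0 hP (pow_ne_zero 20 hp0)
  have ne : ∀ a, a ≠ 0 → qPochInf ((p ^ 2) ^ a) ((p ^ 2) ^ 25) ≠ 0 := fun a ha =>
    qPochInf_ne_zero hq ha (by norm_num)
  have n5 := ne 5 (by norm_num)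
  have n10 := ne 10 (by norm_num)
  have n15 := ne 15 (by norm_num)
  have n20 := ne 20 (by norm_num)
  have n25 := ne 25 (by norm_num)
  rw [← pentagonal_number hp0 hp, pentagonal_dissection hp0 hp, pentagonal_number hP0 hP]
  generalize (∑' l, thetaTerm ((p ^ 25) ^ 3) ((p ^ 10) ^ 3 * (p ^ 25) ^ 2) l +
        p ^ 10 * ∑' l, thetaTerm ((p ^ 25) ^ 3) ((p ^ 10) ^ 3 * (p ^ 25) ^ 4) l) = A at h1 ⊢
  generalize (∑' l, thetaTerm ((p ^ 25) ^ 3) ((p ^ 20) ^ 3 * (p ^ 25) ^ 2) l +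
        p ^ 20 * ∑' l, thetaTerm ((p ^ 25) ^ 3) ((p ^ 20) ^ 3 * (p ^ 25) ^ 4) l) = B at h2 ⊢
  have d1 : (p ^ 25) ^ 2 / p ^ 10 = (p ^ 2) ^ 20 := by field_simp
  have d2 : (p ^ 25) ^ 2 / (p ^ 10) ^ 2 = (p ^ 2) ^ 15 := by field_simp
  have d3 : (p ^ 25) ^ 2 / p ^ 20 = (p ^ 2) ^ 15 := by field_simp
  have d4 : (p ^ 25) ^ 2 / (p ^ 20) ^ 2 = (p ^ 2) ^ 5 := by field_simp
  rw [d1, d2, show p ^ 10 = (p ^ 2) ^ 5 by ring, show ((p ^ 2) ^ 5) ^ 2 = (p ^ 2) ^ 10 by ring,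
    show (p ^ 25) ^ 2 = (p ^ 2) ^ 25 by ring] at h1
  rw [d3, d4, show p ^ 20 = (p ^ 2) ^ 10 by ring, show ((p ^ 2) ^ 10) ^ 2 = (p ^ 2) ^ 20 by ring,
    show (p ^ 25) ^ 2 = (p ^ 2) ^ 25 by ring] at h2
  rw [← eq_div_iff (mul_ne_zero n5 n20)] at h1
  rw [← eq_div_iff (mul_ne_zero n10 n15)] at h2
  rw [h1, h2, show (p ^ 25) ^ 2 = (p ^ 2) ^ 25 by ring]
  simp only [Jb, Jba, show 25 - 10 = 15 from rfl, show 25 - 5 = 20 from rfl]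
  generalize qPochInf ((p ^ 2) ^ 5) ((p ^ 2) ^ 25) = a at n5 ⊢
  generalize qPochInf ((p ^ 2) ^ 10) ((p ^ 2) ^ 25) = b at n10 ⊢
  generalize qPochInf ((p ^ 2) ^ 15) ((p ^ 2) ^ 25) = c at n15 ⊢
  generalize qPochInf ((p ^ 2) ^ 20) ((p ^ 2) ^ 25) = d at n20 ⊢
  generalize qPochInf ((p ^ 2) ^ 25) ((p ^ 2) ^ 25) = J at n25 ⊢
  field_simp
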